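/- Fix integers 0 < d < n. For 1 ≤ b ≤ d and real k ∈ [d−1, n−d] define A(b,k) := Σ_{i=0}^{d−b} C(n−b,i) + Σ_{i=d−b+1}^{d} C(k,i) and B(b,k) := Σ_{i=0}^{d−b} b·C(n−b,i) + Σ_{i=d−b+1}^{d−1} (d−i)·C(k,i), where C(x,i) := x(x−1)⋯(x−i+1)/i! is the generalized binomial coefficient. Fix a value A and, for each b, choose a real k_b ∈ [d−1, n−d] with A(b,k_b) = A. Then B(d,k_d) = min_{1≤b≤d} B(b,k_b). -/

import Mathlib

noncomputable section

/-- The generalized binomial coefficient `C(x, i) = x(x-1)⋯(x-i+1)/i!`. -/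
noncomputable def gchoose (x : ℝ) (i : ℕ) : ℝ :=
  (∏ j ∈ Finset.range i, (x - j)) / (Nat.factorial i)

/-- `A(b,k) = ∑_{i=0}^{d-b} C(n-b,i) + ∑_{i=d-b+1}^{d} C(k,i)`. -/
noncomputable def Afun (d n b : ℕ) (k : ℝ) : ℝ :=
  (∑ i ∈ Finset.range (d - b + 1), gchoose ((n : ℝ) - b) i) +
  (∑ i ∈ Finset.Icc (d - b + 1) d, gchoose k i)

/-- `B(b,k) = ∑_{i=0}^{d-b} b·C(n-b,i) + ∑_{i=d-b+1}^{d-1} (d-i)·C(k,i)`. -/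
noncomputable def Bfun (d n b : ℕ) (k : ℝ) : ℝ :=
  (∑ i ∈ Finset.range (d - b + 1), (b : ℝ) * gchoose ((n : ℝ) - b) i) +
  (∑ i ∈ Finset.Icc (d - b + 1) (d - 1), ((d : ℝ) - i) * gchoose k i)

/-!
Put `m = d - b`, and let `F_b(j)` be the sum of the terms of `A(b, k_b)` of index at most `j`.
Summation by parts turns `B` into a sum of such partial sums: `B(b, k_b) = ∑_{m ≤ j < d} F_b(j)`.
Since `C(n-d, 0) = 1 = C(k_d, 0)`, the partial sums for `b = d` are `S(j) = ∑_{i ≤ j} C(k_d, i)`.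

By Vandermonde's identity `S(j) ≤ C(k_d + m, j) ≤ C(n-b, j)` for `j ≤ m`, hence
`S(0) + ⋯ + S(m) ≤ F_b(m)`, so the first `m + 1` terms of `B(d, k_d)` are paid for by the first term
of `B(b, k_b)`. For `m < j < d` we have `S(j) ≤ F_b(j)`: beyond index `m` the two sums are made of
the terms `C(k_d, i)` and `C(k_b, i)`, and monotonicity of `C(·, i)` lets us compare the heads if
`k_d ≤ k_b` and the tails, using `A(d, k_d) ≤ A(b, k_b)`, if `k_b ≤ k_d`.
-/

open Finset

lemma add_sum_le_add_sum_of_subset {ι M : Type*} [AddCommMonoid M] [PartialOrder M]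
    [IsOrderedCancelAddMonoid M] {s t : Finset ι} (hst : s ⊆ t) {f g : ι → M} {a c : M}
    (hac : a ≤ c)
    (hsum : a + ∑ i ∈ t, f i ≤ c + ∑ i ∈ t, g i)
    (hfg : (∀ i ∈ t, f i ≤ g i) ∨ ∀ i ∈ t, g i ≤ f i) :
    a + ∑ i ∈ s, f i ≤ c + ∑ i ∈ s, g i := by
  classical
  obtain hfg | hgf := hfg
  · exact add_le_add hac (sum_le_sum fun i hi ↦ hfg i (hst hi))
  · have htail : ∑ i ∈ t \ s, g i ≤ ∑ i ∈ t \ s, f i :=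
      sum_le_sum fun i hi ↦ hgf i (mem_sdiff.mp hi).1
    rw [← sum_sdiff hst, ← sum_sdiff hst, add_left_comm, add_left_comm c] at hsum
    exact le_of_add_le_add_left (hsum.trans (add_le_add_left htail _))

lemma sum_Ico_sum_Icc_succ {M : Type*} [AddCommMonoid M] (m d : ℕ) (f : ℕ → M) :
    ∑ j ∈ Ico m d, ∑ i ∈ Icc (m + 1) j, f i = ∑ i ∈ Icc (m + 1) (d - 1), (d - i) • f i := by
  rw [sum_comm' (t' := Icc (m + 1) (d - 1)) (s' := fun i ↦ Ico i d)]
  · simp only [sum_const, Nat.card_Ico]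
  · intro j i
    simp only [mem_Ico, mem_Icc]
    omega

lemma gchoose_zero_right (x : ℝ) : gchoose x 0 = 1 := by
  simp [gchoose]

lemma gchoose_eq_descPochhammer_eval_div (x : ℝ) (i : ℕ) :
    gchoose x i = (descPochhammer ℝ i).eval x / i.factorial := by
  rw [gchoose, descPochhammer_eval_eq_prod_range]

lemma gchoose_eq_choose (x : ℝ) (i : ℕ) : gchoose x i = Ring.choose x i := by
  rw [gchoose_eq_descPochhammer_eval_div, Ring.choose_eq_smul, smul_eq_mul, div_eq_inv_mul,
    ← descPochhammer_map (Int.castRingHom ℝ), Polynomial.eval_map, ← Polynomial.aeval_eq_smeval,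
    Polynomial.aeval_def, algebraMap_int_eq]

lemma gchoose_nonneg {x : ℝ} {i : ℕ} (hx : (i : ℝ) - 1 ≤ x) : 0 ≤ gchoose x i := by
  rw [gchoose_eq_descPochhammer_eval_div]
  exact div_nonneg (descPochhammer_nonneg hx) i.factorial.cast_nonneg

lemma monotoneOn_gchoose (i : ℕ) : MonotoneOn (gchoose · i) (Set.Ici ((i : ℝ) - 1)) := by
  intro x hx y hy hxy
  simp only [gchoose_eq_descPochhammer_eval_div]
  exact div_le_div_of_nonneg_right (monotoneOn_descPochhammer_eval i hx hy hxy)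
    i.factorial.cast_nonneg

lemma monotoneOn_gchoose_of_le {i d : ℕ} (hid : i ≤ d) :
    MonotoneOn (gchoose · i) (Set.Ici ((d : ℝ) - 1)) :=
  (monotoneOn_gchoose i).mono (Set.Ici_subset_Ici.mpr (sub_le_sub_right (Nat.cast_le.mpr hid) 1))

lemma sum_gchoose_le_gchoose_add_natCast {x : ℝ} {j m : ℕ} (hjm : j ≤ m) (hx : (j : ℝ) - 1 ≤ x) :
    ∑ i ∈ range (j + 1), gchoose x i ≤ gchoose (x + m) j := by
  rw [gchoose_eq_choose (x + m), Ring.add_choose_eq j (Commute.all x (m : ℝ)),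
    Nat.sum_antidiagonal_eq_sum_range_succ_mk]
  refine sum_le_sum fun i hi ↦ ?_
  have hij : i ≤ j := mem_range_succ_iff.mp hi
  have hnonneg : 0 ≤ gchoose x i := gchoose_nonneg (by linarith [Nat.cast_le (α := ℝ).mpr hij])
  have hone : (1 : ℝ) ≤ m.choose (j - i) := by
    exact_mod_cast Nat.choose_pos (by omega : j - i ≤ m)
  rw [← gchoose_eq_choose, Ring.choose_natCast]
  exact le_mul_of_one_le_right hnonneg hone

/-- The sum of the terms of `Afun d n b k` of index at most `j`, for `d - b ≤ j`; summing
these over `d - b ≤ j < d` gives `Bfun d n b k`. For smaller `j` the whole block `i ≤ d - b` is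
still included. -/
def partialAfun (d n b : ℕ) (k : ℝ) (j : ℕ) : ℝ :=
  (∑ i ∈ range (d - b + 1), gchoose ((n : ℝ) - b) i) + ∑ i ∈ Icc (d - b + 1) j, gchoose k i

lemma partialAfun_right (d n b : ℕ) (k : ℝ) : partialAfun d n b k d = Afun d n b k := rfl

lemma partialAfun_sub (d n b : ℕ) (k : ℝ) :
    partialAfun d n b k (d - b) = ∑ i ∈ range (d - b + 1), gchoose ((n : ℝ) - b) i := by
  simp [partialAfun]

lemma Bfun_eq_sum_partialAfun {d b : ℕ} (n : ℕ) (hbd : b ≤ d) (k : ℝ) :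
    Bfun d n b k = ∑ j ∈ Ico (d - b) d, partialAfun d n b k j := by
  simp only [Bfun, partialAfun]
  rw [sum_add_distrib, sum_Ico_sum_Icc_succ, sum_const, Nat.card_Ico, Nat.sub_sub_self hbd,
    nsmul_eq_mul, mul_sum]
  congr 1
  refine sum_congr rfl fun i hi ↦ ?_
  rw [nsmul_eq_mul, Nat.cast_sub (by grind)]

lemma partialAfun_self (d n : ℕ) (k : ℝ) (j : ℕ) :
    partialAfun d n d k j = ∑ i ∈ range (j + 1), gchoose k i := by
  rw [partialAfun, Nat.sub_self, sum_range_one, gchoose_zero_right, ← gchoose_zero_right k,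
    ← Ico_add_one_right_eq_Icc, range_eq_Ico, sum_eq_sum_Ico_succ_bot (Nat.add_one_pos j)]

lemma partialAfun_self_eq_add {d m j : ℕ} (n : ℕ) (hmj : m ≤ j) (k : ℝ) :
    partialAfun d n d k j =
      ∑ i ∈ range (m + 1), gchoose k i + ∑ i ∈ Icc (m + 1) j, gchoose k i := by
  rw [partialAfun_self, ← Ico_add_one_right_eq_Icc,
    sum_range_add_sum_Ico _ (Nat.add_le_add_right hmj 1)]

section Comparison

variable {d n b : ℕ} {k k' : ℝ}

lemma partialAfun_self_le_gchoose {j : ℕ} (hbd : b ≤ d) (hk : (d : ℝ) - 1 ≤ k)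
    (hkn : k ≤ (n : ℝ) - d) (hj : j ≤ d - b) :
    partialAfun d n d k j ≤ gchoose ((n : ℝ) - b) j := by
  have hjd : j ≤ d := hj.trans (Nat.sub_le d b)
  have hle : k ≤ k + (d - b : ℕ) := le_add_of_nonneg_right (Nat.cast_nonneg _)
  have hkm : k + (d - b : ℕ) ≤ (n : ℝ) - b := by
    rw [Nat.cast_sub hbd]
    linarith
  calc partialAfun d n d k j = ∑ i ∈ range (j + 1), gchoose k i := partialAfun_self d n k j
    _ ≤ gchoose (k + (d - b : ℕ)) j :=
      sum_gchoose_le_gchoose_add_natCast hj ((sub_le_sub_right (Nat.cast_le.mpr hjd) 1).trans hk)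
    _ ≤ gchoose ((n : ℝ) - b) j :=
      monotoneOn_gchoose_of_le hjd (hk.trans hle) (hk.trans (hle.trans hkm)) hkm

lemma sum_partialAfun_self_le (hbd : b ≤ d) (hk : (d : ℝ) - 1 ≤ k) (hkn : k ≤ (n : ℝ) - d) :
    ∑ j ∈ range (d - b + 1), partialAfun d n d k j ≤ partialAfun d n b k' (d - b) := by
  rw [partialAfun_sub]
  exact sum_le_sum fun j hj ↦ partialAfun_self_le_gchoose hbd hk hkn (mem_range_succ_iff.mp hj)

lemma partialAfun_self_le {j : ℕ} (hbd : b ≤ d) (hk : (d : ℝ) - 1 ≤ k) (hkn : k ≤ (n : ℝ) - d)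
    (hk' : (d : ℝ) - 1 ≤ k') (hA : Afun d n d k ≤ Afun d n b k') (hbj : d - b ≤ j) (hjd : j ≤ d) :
    partialAfun d n d k j ≤ partialAfun d n b k' j := by
  have hkb : k ≤ (n : ℝ) - b := by linarith [Nat.cast_le (α := ℝ).mpr hbd]
  have hlow : ∑ i ∈ range (d - b + 1), gchoose k i ≤
      ∑ i ∈ range (d - b + 1), gchoose ((n : ℝ) - b) i :=
    sum_le_sum fun i hi ↦ monotoneOn_gchoose_of_le
      ((mem_range_succ_iff.mp hi).trans (Nat.sub_le d b)) hk (hk.trans hkb) hkb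
  rw [← partialAfun_right, ← partialAfun_right,
    partialAfun_self_eq_add n (Nat.sub_le d b), partialAfun] at hA
  rw [partialAfun_self_eq_add n hbj, partialAfun]
  refine add_sum_le_add_sum_of_subset (Icc_subset_Icc_right hjd) hlow hA ?_
  exact (le_total k k').imp
    (fun h i hi ↦ monotoneOn_gchoose_of_le (mem_Icc.mp hi).2 hk hk' h)
    (fun h i hi ↦ monotoneOn_gchoose_of_le (mem_Icc.mp hi).2 hk' hk h)

lemma Bfun_self_le (hb : 1 ≤ b) (hbd : b ≤ d) (hk : (d : ℝ) - 1 ≤ k) (hkn : k ≤ (n : ℝ) - d)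
    (hk' : (d : ℝ) - 1 ≤ k') (hA : Afun d n d k ≤ Afun d n b k') :
    Bfun d n d k ≤ Bfun d n b k' := by
  have hmd : d - b < d := by omega
  calc Bfun d n d k = ∑ j ∈ range d, partialAfun d n d k j := by
        rw [Bfun_eq_sum_partialAfun n le_rfl, Nat.sub_self, range_eq_Ico]
    _ = ∑ j ∈ range (d - b + 1), partialAfun d n d k j +
          ∑ j ∈ Ico (d - b + 1) d, partialAfun d n d k j :=
        (sum_range_add_sum_Ico _ hmd).symm
    _ ≤ partialAfun d n b k' (d - b) + ∑ j ∈ Ico (d - b + 1) d, partialAfun d n b k' j := by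
        refine add_le_add (sum_partialAfun_self_le hbd hk hkn) (sum_le_sum fun j hj ↦ ?_)
        have ⟨hmj, hjd⟩ := mem_Ico.mp hj
        exact partialAfun_self_le hbd hk hkn hk' hA (by omega) hjd.le
    _ = ∑ j ∈ Ico (d - b) d, partialAfun d n b k' j := (sum_eq_sum_Ico_succ_bot hmd _).symm
    _ = Bfun d n b k' := (Bfun_eq_sum_partialAfun n hbd k').symm

end Comparison

theorem stmt16_general (d n : ℕ) (hd : 0 < d) (k : ℕ → ℝ)
    (hk : ∀ b, 1 ≤ b → b ≤ d → (d : ℝ) - 1 ≤ k b) (hkn : k d ≤ (n : ℝ) - d)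
    (hA : ∀ b, 1 ≤ b → b ≤ d → Afun d n d (k d) ≤ Afun d n b (k b)) :
    Bfun d n d (k d) =
      (Icc 1 d).inf' (nonempty_Icc.mpr hd) (fun b => Bfun d n b (k b)) := by
  refine le_antisymm (le_inf' _ _ fun b hb ↦ ?_) (inf'_le _ (mem_Icc.mpr ⟨hd, le_rfl⟩))
  have ⟨hb1, hbd⟩ := mem_Icc.mp hb
  exact Bfun_self_le hb1 hbd (hk d hd le_rfl) hkn (hk b hb1 hbd) (hA b hb1 hbd)

/-- Fix `0 < d < n`. If for each `1 ≤ b ≤ d` a real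
`k_b ∈ [d-1, n-d]` is chosen so that all values `A(b, k_b)` coincide, then
`B(d, k_d) = min_{1 ≤ b ≤ d} B(b, k_b)`. -/
theorem stmt16 (d n : ℕ) (hd : 0 < d) (hdn : d < n)
    (k : ℕ → ℝ)
    (hk : ∀ b, 1 ≤ b → b ≤ d → (d : ℝ) - 1 ≤ k b ∧ k b ≤ (n : ℝ) - d)
    (A : ℝ)
    (hA : ∀ b, 1 ≤ b → b ≤ d → Afun d n b (k b) = A) :
    Bfun d n d (k d) =
      (Finset.Icc 1 d).inf' (Finset.nonempty_Icc.mpr hd)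
        (fun b => Bfun d n b (k b)) :=
  stmt16_general d n hd k (fun b hb hbd ↦ (hk b hb hbd).1) (hk d hd le_rfl).2
    fun b hb hbd ↦ ((hA d hd le_rfl).trans (hA b hb hbd).symm).le
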